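/- arXiv:0710.5004 — 3 statements merged into one kernel-verified Lean document; each statement's English description precedes it below -/
import Mathlib

section
/- If L : ℝ → ℝ is slowly varying, then log L(x) = o(log x) as x → ∞; that is, (log L(x))/(log x) → 0 as x → ∞. -/
open Filter MeasureTheory

/-- If the increments of a measurable function tend to zero, then they tend to zero in measure
on `[0, 2]` along every sequence tending to infinity. -/
lemma tendsto_volume_increment_ge {h : ℝ → ℝ} (hm : Measurable h)
    (hinc : ∀ s, Tendsto (fun y => h (y + s) - h y) atTop (nhds 0))
    {y : ℕ → ℝ} (hy : Tendsto y atTop atTop) {ε : ℝ} (hε : 0 < ε) :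
    Tendsto (fun n => volume ({t | ε ≤ |h (y n + t) - h (y n)|} ∩ Set.Icc 0 2))
      atTop (nhds 0) := by
  have hmeas : ∀ n, Measurable fun t => h (y n + t) - h (y n) := fun n => by fun_prop
  have key : TendstoInMeasure (volume.restrict (Set.Icc (0 : ℝ) 2))
      (fun n t => h (y n + t) - h (y n)) atTop (fun _ => 0) :=
    tendstoInMeasure_of_tendsto_ae (fun n => (hmeas n).aestronglyMeasurable)
      (Eventually.of_forall fun t => (hinc t).comp hy)
  refine (tendstoInMeasure_iff_norm.1 key ε hε).congr fun n => ?_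
  simp only [sub_zero, Real.norm_eq_abs]
  exact Measure.restrict_apply (measurableSet_le measurable_const (hmeas n).abs)

/-- Uniform convergence theorem for slowly varying functions, in additive form. -/
lemma exists_forall_abs_increment_le {h : ℝ → ℝ} (hm : Measurable h)
    (hinc : ∀ s, Tendsto (fun y => h (y + s) - h y) atTop (nhds 0))
    {ε : ℝ} (hε : 0 < ε) :
    ∃ X, ∀ y, X ≤ y → ∀ s ∈ Set.Icc (0 : ℝ) 1, |h (y + s) - h y| ≤ ε := by
  by_contra! hcon
  choose y hy s hs hlt using fun n : ℕ => hcon n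
  have hyt : Tendsto y atTop atTop := tendsto_atTop_mono hy tendsto_natCast_atTop_atTop
  have hzt : Tendsto (fun n => y n + s n) atTop atTop :=
    tendsto_atTop_mono (fun n => by linarith [(hs n).1]) hyt
  have hsum := (tendsto_volume_increment_ge hm hinc hyt (half_pos hε)).add
    (tendsto_volume_increment_ge hm hinc hzt (half_pos hε))
  rw [add_zero] at hsum
  obtain ⟨n, hn⟩ := (hsum.eventually (gt_mem_nhds one_pos)).exists
  set A := {t | ε / 2 ≤ |h (y n + t) - h (y n)|} ∩ Set.Icc 0 2
  set B := {t | ε / 2 ≤ |h (y n + s n + t) - h (y n + s n)|} ∩ Set.Icc 0 2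
  have hcover : Set.Icc (1 : ℝ) 2 ⊆ A ∪ (fun t => t - s n) ⁻¹' B := by
    intro u hu
    obtain ⟨hs0, hs1⟩ := hs n
    obtain ⟨hu1, hu2⟩ := hu
    by_cases hA : ε / 2 ≤ |h (y n + u) - h (y n)|
    · exact Or.inl ⟨hA, by linarith, hu2⟩
    · refine Or.inr ⟨?_, by linarith, by linarith⟩
      have hn' := hlt n
      have heq : y n + s n + (u - s n) = y n + u := by ring
      change ε / 2 ≤ |h (y n + s n + (u - s n)) - h (y n + s n)|
      rw [heq]
      have htri := abs_sub_le (h (y n + s n)) (h (y n + u)) (h (y n))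
      rw [abs_sub_comm (h (y n + s n)) (h (y n + u))] at htri
      linarith
  have hle : (1 : ENNReal) ≤ volume A + volume B := by
    calc (1 : ENNReal) = volume (Set.Icc (1 : ℝ) 2) := by
          rw [Real.volume_Icc]; norm_num
      _ ≤ volume A + volume ((fun t => t - s n) ⁻¹' B) :=
          (measure_mono hcover).trans (measure_union_le _ _)
      _ = volume A + volume B := by
          simp only [sub_eq_add_neg, measure_preimage_add_right]
  exact absurd hn (not_lt.2 hle)

/-- A measurable function whose increments tend to zero grows sublinearly. -/
lemma tendsto_div_id_of_tendsto_increment {h : ℝ → ℝ} (hm : Measurable h)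
    (hinc : ∀ s, Tendsto (fun y => h (y + s) - h y) atTop (nhds 0)) :
    Tendsto (fun y => h y / y) atTop (nhds 0) := by
  rw [← Asymptotics.isLittleO_iff_tendsto' (by
    filter_upwards [eventually_gt_atTop 0] with y hy h0 using absurd h0 hy.ne')]
  refine Asymptotics.isLittleO_iff.2 fun ε hε => ?_
  obtain ⟨X, hX⟩ := exists_forall_abs_increment_le hm hinc (half_pos hε)
  have hgrow : ∀ n : ℕ, ∀ y, X ≤ y → y ≤ X + n → |h y - h X| ≤ ε / 2 * (y - X + 1) := by
    intro n
    induction n with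
    | zero =>
      intro y h1 h2
      obtain rfl : y = X := le_antisymm (by simpa using h2) h1
      simpa using (half_pos hε).le
    | succ n ih =>
      intro y h1 h2
      push_cast at h2
      rcases le_or_gt y (X + 1) with h3 | h3
      · have hb := hX X le_rfl (y - X) ⟨by linarith, by linarith⟩
        rw [add_sub_cancel] at hb
        nlinarith
      · have hb := hX (y - 1) (by linarith) 1 ⟨zero_le_one, le_rfl⟩
        rw [sub_add_cancel] at hb
        have hi := ih (y - 1) (by linarith) (by linarith)
        have htri := abs_sub_le (h y) (h (y - 1)) (h X)
        linarith
  filter_upwards [eventually_ge_atTop X, eventually_gt_atTop 0,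
    eventually_ge_atTop ((|h X| + ε / 2 * (1 - X)) / (ε / 2))] with y h1 h2 h3
  obtain ⟨n, hn⟩ := exists_nat_ge (y - X)
  have hb := hgrow n y h1 (by linarith)
  rw [div_le_iff₀ (half_pos hε)] at h3
  have htri := abs_sub_abs_le_abs_sub (h y) (h X)
  rw [Real.norm_eq_abs, Real.norm_eq_abs, abs_of_pos h2]
  linarith

/-- If `L : ℝ → ℝ` is slowly varying (measurable, eventually positive, and
`L(tx)/L(x) → 1` as `x → ∞` for every `t > 0`), then `log L(x) / log x → 0` as `x → ∞`. -/
theorem slowly_varying_log_isLittleO_log (L : ℝ → ℝ)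
    (hmeas : Measurable L)
    (hpos : ∀ᶠ x in atTop, 0 < L x)
    (hslow : ∀ t : ℝ, 0 < t →
      Tendsto (fun x => L (t * x) / L x) atTop (nhds 1)) :
    Tendsto (fun x => Real.log (L x) / Real.log x) atTop (nhds 0) := by
  have hm : Measurable fun y => Real.log (L (Real.exp y)) :=
    Real.measurable_log.comp (hmeas.comp Real.measurable_exp)
  have hposexp : ∀ᶠ y in atTop, 0 < L (Real.exp y) := Real.tendsto_exp_atTop.eventually hpos
  have hinc : ∀ s, Tendsto
      (fun y => Real.log (L (Real.exp (y + s))) - Real.log (L (Real.exp y)))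
      atTop (nhds 0) := by
    intro s
    have hlim := ((hslow (Real.exp s) (Real.exp_pos s)).comp Real.tendsto_exp_atTop).log
      one_ne_zero
    rw [Real.log_one] at hlim
    refine hlim.congr' ?_
    filter_upwards [hposexp, (tendsto_atTop_add_const_right atTop s tendsto_id).eventually hposexp]
      with y h1 h2
    rw [id] at h2
    rw [← Real.log_div (ne_of_gt h2) (ne_of_gt h1)]
    simp [Real.exp_add, mul_comm]
  refine ((tendsto_div_id_of_tendsto_increment hm hinc).comp Real.tendsto_log_atTop).congr' ?_
  filter_upwards [eventually_gt_atTop 0] with x hx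
  simp [Real.exp_log hx]
end

section
/- Fix n ≥ 1, 1 ≤ k ≤ n, and 1 ≤ i ≤ n − k + 1. The number of sequences (i_1, …, i_n) of positive integers satisfying i_n = 1 and i_j ∈ {i_{j+1}, i_{j+1} + 1} for all 1 ≤ j ≤ n − 1, and additionally i_k = i, is exactly C(n−k, i−1) · 2^{k−1}, where C denotes the binomial coefficient. -/
/-- Starting-index sequences of scans of a sequence of length `n + 1`. -/
def IsScan {n : ℕ} (f : Fin (n + 1) → ℕ) : Prop :=
  f (Fin.last n) = 1 ∧ ∀ j : Fin n, f j.castSucc = f j.succ ∨ f j.castSucc = f j.succ + 1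

theorem IsScan.pos {n : ℕ} {f : Fin (n + 1) → ℕ} (hf : IsScan f) (j : Fin (n + 1)) :
    0 < f j := by
  induction j using Fin.reverseInduction with
  | last => simp [hf.1]
  | cast j ih => have := hf.2 j; omega

theorem isScan_cons_iff {n : ℕ} (a : ℕ) (g : Fin (n + 1) → ℕ) :
    IsScan (Fin.cons a g : Fin (n + 2) → ℕ) ↔ IsScan g ∧ (a = g 0 ∨ a = g 0 + 1) := by
  unfold IsScan
  rw [Fin.forall_fin_succ, ← Fin.succ_last]
  simp only [← Fin.succ_castSucc, Fin.cons_succ, Fin.castSucc_zero, Fin.cons_zero]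
  tauto

/-- Scans of length `n + 2` split according to whether the first step is constant. -/
theorem encard_isScan_succ {n : ℕ} (P : (Fin (n + 2) → ℕ) → Prop) :
    {f | IsScan f ∧ P f}.encard =
      {g : Fin (n + 1) → ℕ | IsScan g ∧ P (Fin.cons (g 0) g)}.encard +
        {g : Fin (n + 1) → ℕ | IsScan g ∧ P (Fin.cons (g 0 + 1) g)}.encard := by
  have inj (c : ℕ) : Function.Injective
      (fun g : Fin (n + 1) → ℕ => (Fin.cons (g 0 + c) g : Fin (n + 2) → ℕ)) :=
    fun g h hgh => (Fin.cons_injective2 hgh).2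
  rw [← (inj 0).encard_image, ← (inj 1).encard_image, ← Set.encard_union_eq]
  · congr 1
    ext f
    induction f using Fin.consCases with
    | _ a g =>
      simp only [Set.mem_ofPred_eq, Set.mem_union, Set.mem_image, Fin.cons_inj, isScan_cons_iff,
        add_zero]
      constructor
      · rintro ⟨⟨hg, rfl | rfl⟩, hP⟩
        · exact Or.inl ⟨g, ⟨hg, hP⟩, rfl, rfl⟩
        · exact Or.inr ⟨g, ⟨hg, hP⟩, rfl, rfl⟩
      · rintro (⟨g, ⟨hg, hP⟩, rfl, rfl⟩ | ⟨g, ⟨hg, hP⟩, rfl, rfl⟩)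
        · exact ⟨⟨hg, Or.inl rfl⟩, hP⟩
        · exact ⟨⟨hg, Or.inr rfl⟩, hP⟩
  · rw [Set.disjoint_left]
    rintro _ ⟨g, -, rfl⟩ ⟨h, -, hgh⟩
    obtain ⟨h0, rfl⟩ := Fin.cons_injective2 hgh
    omega

theorem encard_isScan_apply_eq (n : ℕ) (k : Fin (n + 1)) (i : ℕ) :
    {f : Fin (n + 1) → ℕ | IsScan f ∧ f k = i + 1}.encard =
      ((n - k).choose i * 2 ^ (k : ℕ) : ℕ) := by
  induction n generalizing i with
  | zero =>
    obtain rfl : k = 0 := Fin.fin_one_eq_zero k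
    cases i with
    | zero =>
      have : {f : Fin 1 → ℕ | IsScan f ∧ f 0 = 0 + 1} = {fun _ => 1} := by
        ext f
        simp [IsScan, funext_iff]
      simp [this]
    | succ i =>
      have : {f : Fin 1 → ℕ | IsScan f ∧ f 0 = i + 1 + 1} = ∅ := by
        ext f
        simp +contextual [IsScan]
      simp [this]
  | succ n ih =>
    rw [encard_isScan_succ]
    cases k using Fin.cases with
    | zero =>
      simp only [Fin.cons_zero, add_left_inj]
      rw [ih 0]
      cases i with
      | zero =>
        have : {g : Fin (n + 1) → ℕ | IsScan g ∧ g 0 = 0} = ∅ := by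
          ext g
          simp only [Set.mem_ofPred_eq, Set.mem_empty_iff_false, iff_false, not_and]
          exact fun hg => (hg.pos 0).ne'
        simp [this]
      | succ i =>
        rw [ih 0, ← Nat.cast_add]
        simp [Nat.choose_succ_succ, add_comm]
    | succ k =>
      simp only [Fin.cons_succ]
      rw [ih k, ← Nat.cast_add, Fin.val_succ, Nat.add_sub_add_right]
      congr 1
      ring


/-- Corollary 3.1: for `n ≥ 1`, `1 ≤ k ≤ n`, `1 ≤ i ≤ n - k + 1`, the number
of scans of a sequence of length `n` — encoded by starting indices `(i_1, …, i_n)`, i.e.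
sequences of positive integers with `i_n = 1` and `i_j ∈ {i_{j+1}, i_{j+1} + 1}` for
`1 ≤ j ≤ n-1` — whose block of size `k` starts at `i`, i.e. with `i_k = i`, equals
`(n-k).choose (i-1) * 2^(k-1)`. Index `j ∈ {1, …, n}` is represented by `m : Fin n` with
`(m : ℕ) = j - 1`. -/
theorem card_scans_through_block (n k i : ℕ) (hn : 1 ≤ n)
    (hk1 : 1 ≤ k) (hkn : k ≤ n) (hi1 : 1 ≤ i) (hin : i ≤ n - k + 1) :
    {f : Fin n → ℕ |
        (∀ j, 0 < f j) ∧
        (∀ j : Fin n, (j : ℕ) = n - 1 → f j = 1) ∧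
        (∀ j l : Fin n, (l : ℕ) = (j : ℕ) + 1 → (f j = f l ∨ f j = f l + 1)) ∧
        (∀ j : Fin n, (j : ℕ) = k - 1 → f j = i)}.ncard
      = (n - k).choose (i - 1) * 2 ^ (k - 1) := by
  obtain ⟨n, rfl⟩ := Nat.exists_eq_add_of_le' hn
  obtain ⟨k, rfl⟩ := Nat.exists_eq_add_of_le' hk1
  obtain ⟨i, rfl⟩ := Nat.exists_eq_add_of_le' hi1
  have key := encard_isScan_apply_eq n ⟨k, hkn⟩ i
  simp only [Nat.add_sub_add_right, Nat.add_sub_cancel]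
  rw [Set.ncard, ← ENat.toNat_natCast ((n - k).choose i * 2 ^ k), ← key]
  congr 2
  ext f
  constructor
  · rintro ⟨-, hlast, hstep, hk⟩
    exact ⟨⟨hlast _ rfl, fun j => hstep _ _ rfl⟩, hk _ rfl⟩
  · rintro ⟨hf, hk⟩
    refine ⟨hf.pos, fun j hj => ?_, fun j l hl => ?_, fun j hj => ?_⟩
    · rw [show j = Fin.last n from Fin.ext hj, hf.1]
    · have hj : (j : ℕ) < n := by omega
      rw [show l = (⟨j, hj⟩ : Fin n).succ from Fin.ext hl]
      exact hf.2 ⟨j, hj⟩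
    · rw [show j = ⟨k, hkn⟩ from Fin.ext hj, hk]
end

section
/- Let (T_k)_{k≥1} be real random variables, μ ∈ ℝ, γ < 0, L slowly varying with L(k) > 0 for all k ≥ 1, and J a probability measure on ℝ such that n^{-γ} L(n) |T_n − μ| converges in distribution to J as n → ∞. If (k_n) are positive integers with k_n → ∞ and k_n/n → 0 as n → ∞, then k_n^{-γ} L(k_n) (T_n − μ) → 0 in probability, and consequently k_n^{-γ} L(k_n) |T_{k_n} − T_n| converges in distribution to J as n → ∞. -/
open Filter MeasureTheory

open scoped Topology

/-- **Uniform convergence theorem** for slowly varying functions, in additive and sequential form: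
if the increments of a measurable `h` tend to `0` at infinity, they do so along any two sequences
tending to infinity that stay at bounded distance. -/
theorem tendsto_sub_of_tendsto_add_sub {h : ℝ → ℝ} (hmeas : Measurable h)
    (hslow : ∀ u, Tendsto (fun x => h (x + u) - h x) atTop (𝓝 0)) {x y : ℕ → ℝ}
    (hx : Tendsto x atTop atTop) (hy : Tendsto y atTop atTop)
    (hxy : ∀ᶠ n in atTop, x n ≤ y n ∧ y n ≤ x n + 1) :
    Tendsto (fun n => h (y n) - h (x n)) atTop (𝓝 0) := by
  have key : ∀ z : ℕ → ℝ, Tendsto z atTop atTop → ∀ ε > 0,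
      ∀ᶠ n in atTop, volume ({u | ε ≤ |h (z n + u) - h (z n)|} ∩ Set.Icc 0 3) < 1 := by
    intro z hz ε hε
    have hm : TendstoInMeasure (volume.restrict (Set.Icc (0 : ℝ) 3))
        (fun n u => h (z n + u) - h (z n)) atTop (fun _ => 0) := by
      refine tendstoInMeasure_of_tendsto_ae (fun n => ?_) (ae_of_all _ fun u => (hslow u).comp hz)
      exact ((hmeas.comp (measurable_const_add _)).sub_const _).aestronglyMeasurable
    filter_upwards [(tendstoInMeasure_iff_norm.1 hm ε hε).eventually_lt_const zero_lt_one] with n hn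
    rw [Measure.restrict_apply' measurableSet_Icc] at hn
    simpa using hn
  rw [Metric.tendsto_nhds]
  intro ε hε
  filter_upwards [key x hx (ε / 2) (half_pos hε), key y hy (ε / 2) (half_pos hε), hxy]
    with n hxn hyn hn
  set A := {u | ε / 2 ≤ |h (x n + u) - h (x n)|} ∩ Set.Icc 0 3
  set B := {u | ε / 2 ≤ |h (y n + u) - h (y n)|} ∩ Set.Icc 0 3
  have hB : volume ((fun w => w + (x n - y n)) ⁻¹' B) < 1 := by
    rwa [measure_preimage_add_right]
  have hAB : volume (A ∪ (fun w => w + (x n - y n)) ⁻¹' B) < volume (Set.Icc (1 : ℝ) 3) := by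
    refine (measure_union_le _ _).trans_lt ((ENNReal.add_lt_add hxn hB).trans_eq ?_)
    rw [Real.volume_Icc]
    norm_num
  obtain ⟨w, hw, hw'⟩ := Set.not_subset.1 fun hsub => (measure_mono hsub).not_gt hAB
  have h1 : |h (x n + w) - h (x n)| < ε / 2 := by
    by_contra! hc
    exact hw' (.inl ⟨hc, by linarith [hw.1], hw.2⟩)
  have h2 : |h (x n + w) - h (y n)| < ε / 2 := by
    by_contra! hc
    refine hw' (.inr ⟨?_, ?_, ?_⟩)
    · simpa [show y n + (w + (x n - y n)) = x n + w by ring] using hc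
    · dsimp only; linarith [hw.1]
    · dsimp only; linarith [hw.2]
  rw [abs_lt] at h1 h2
  rw [Real.dist_eq, sub_zero, abs_lt]
  constructor <;> linarith

/-- A **Potter-type bound**: a function whose increments vanish at infinity is dominated by any
linear drift. -/
theorem tendsto_sub_sub_mul_atBot {h : ℝ → ℝ} (hmeas : Measurable h)
    (hslow : ∀ u, Tendsto (fun x => h (x + u) - h x) atTop (𝓝 0)) {ρ : ℝ} (hρ : 0 < ρ)
    {x y : ℕ → ℝ} (hx : Tendsto x atTop atTop) (hxy : Tendsto (fun n => y n - x n) atTop atTop) :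
    Tendsto (fun n => h (x n) - h (y n) - ρ * (y n - x n)) atTop atBot := by
  set j : ℕ → ℕ := fun n => ⌊y n - x n⌋₊
  have hy : Tendsto y atTop atTop := by
    simpa using hx.atTop_add_atTop hxy
  have hxj : Tendsto (fun n => x n + j n) atTop atTop :=
    tendsto_atTop_mono (fun n => le_add_of_nonneg_right (Nat.cast_nonneg _)) hx
  have hclose := tendsto_sub_of_tendsto_add_sub hmeas hslow hxj hy (by
    filter_upwards [hxy.eventually_ge_atTop 0] with n hn
    have h1 := Nat.floor_le hn
    have h2 := Nat.lt_floor_add_one (y n - x n)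
    exact ⟨by linarith, by linarith⟩)
  obtain ⟨X, hX⟩ := eventually_atTop.1
    ((Metric.tendsto_nhds.1 (hslow 1)) (ρ / 2) (half_pos hρ))
  have hstep : ∀ z, X ≤ z → ∀ m : ℕ, h z - h (z + m) ≤ m * (ρ / 2) := by
    intro z hz m
    induction m with
    | zero => simp
    | succ m ih =>
      have h1 := hX (z + m) (hz.trans (le_add_of_nonneg_right (Nat.cast_nonneg _)))
      rw [Real.dist_eq, sub_zero, abs_lt] at h1
      push_cast
      rw [← add_assoc]
      linarith [h1.1]
  have hdrift : Tendsto (fun n => 1 - ρ / 2 * (y n - x n)) atTop atBot :=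
    tendsto_atBot_add_const_left _ _ (tendsto_neg_atTop_atBot.comp
      (hxy.const_mul_atTop (half_pos hρ)))
  refine tendsto_atBot_mono' _ ?_ hdrift
  filter_upwards [hx.eventually_ge_atTop X, hxy.eventually_ge_atTop 0,
    Metric.tendsto_nhds.1 hclose 1 one_pos] with n hn hn0 hn1
  rw [Real.dist_eq, sub_zero, abs_lt] at hn1
  have h1 := hstep (x n) hn (j n)
  have h2 : (j n : ℝ) * (ρ / 2) ≤ (y n - x n) * (ρ / 2) :=
    mul_le_mul_of_nonneg_right (Nat.floor_le hn0) (half_pos hρ).le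
  linarith [hn1.1]

/-- If `L` is slowly varying and `ρ > 0`, then `x ↦ x ^ ρ * L x` is of smaller order along `k`
than along the identity as soon as `k n / n → 0`. -/
theorem tendsto_rpow_mul_slowlyVarying_div {L : ℝ → ℝ} (hLmeas : Measurable L)
    (hLpos : ∀ᶠ x in atTop, 0 < L x)
    (hLslow : ∀ t : ℝ, 0 < t → Tendsto (fun x => L (t * x) / L x) atTop (𝓝 1))
    {ρ : ℝ} (hρ : 0 < ρ) {k : ℕ → ℕ} (hktop : Tendsto k atTop atTop)
    (hkn : Tendsto (fun n : ℕ => (k n : ℝ) / n) atTop (𝓝 0)) :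
    Tendsto (fun n : ℕ => ((k n : ℝ) ^ ρ * L (k n)) / ((n : ℝ) ^ ρ * L n)) atTop (𝓝 0) := by
  have hslow : ∀ u, Tendsto (fun x => Real.log (L (Real.exp (x + u))) - Real.log (L (Real.exp x)))
      atTop (𝓝 0) := by
    intro u
    have h1 := ((hLslow _ (Real.exp_pos u)).comp Real.tendsto_exp_atTop).log one_ne_zero
    rw [Real.log_one] at h1
    refine h1.congr' ?_
    have hshift : Tendsto (fun x : ℝ => Real.exp (x + u)) atTop atTop :=
      Real.tendsto_exp_atTop.comp (tendsto_atTop_add_const_right _ _ tendsto_id)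
    filter_upwards [Real.tendsto_exp_atTop.eventually hLpos, hshift.eventually hLpos] with x hx hxu
    have hmul : Real.exp u * Real.exp x = Real.exp (x + u) := by rw [← Real.exp_add, add_comm]
    simp only [Function.comp_apply, hmul]
    exact Real.log_div hxu.ne' hx.ne'
  have hkR : Tendsto (fun n => (k n : ℝ)) atTop atTop := tendsto_natCast_atTop_atTop.comp hktop
  have hnR : Tendsto (fun n : ℕ => (n : ℝ)) atTop atTop := tendsto_natCast_atTop_atTop
  have hgap : Tendsto (fun n : ℕ => Real.log n - Real.log (k n)) atTop atTop := by
    have hpos : Tendsto (fun n : ℕ => (k n : ℝ) / n) atTop (𝓝[>] 0) := by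
      refine tendsto_nhdsWithin_iff.2 ⟨hkn, ?_⟩
      filter_upwards [hkR.eventually_gt_atTop 0, hnR.eventually_gt_atTop 0] with n h1 h2
      exact div_pos h1 h2
    refine (tendsto_neg_atBot_atTop.comp (Real.tendsto_log_nhdsGT_zero.comp hpos)).congr' ?_
    filter_upwards [hkR.eventually_gt_atTop 0, hnR.eventually_gt_atTop 0] with n h1 h2
    simp only [Function.comp_apply, Real.log_div h1.ne' h2.ne', neg_sub]
  have hmain := tendsto_sub_sub_mul_atBot
    (Real.measurable_log.comp (hLmeas.comp Real.measurable_exp)) hslow hρ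
    (Real.tendsto_log_atTop.comp hkR) hgap
  refine (Real.tendsto_exp_atBot.comp hmain).congr' ?_
  filter_upwards [hkR.eventually_gt_atTop 0, hnR.eventually_gt_atTop 0, hkR.eventually hLpos,
    hnR.eventually hLpos] with n h1 h2 h3 h4
  simp only [Function.comp_apply, Real.exp_log h1, Real.exp_log h2]
  rw [Real.rpow_def_of_pos h1, Real.rpow_def_of_pos h2, Real.exp_sub, Real.exp_sub,
    Real.exp_log h3, Real.exp_log h4, mul_sub, Real.exp_sub, mul_comm ρ, mul_comm ρ]
  field_simp

/-- A sequence converging in distribution, multiplied by a null sequence of scalars, tends to `0`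
in probability. -/
theorem MeasureTheory.TendstoInDistribution.const_mul_tendstoInMeasure_zero
    {Ω Ω' : Type*} [MeasurableSpace Ω] [MeasurableSpace Ω'] {P : Measure Ω}
    [IsProbabilityMeasure P] {P' : Measure Ω'} [IsProbabilityMeasure P'] {X : ℕ → Ω → ℝ}
    {Z : Ω' → ℝ} (hX : TendstoInDistribution X atTop Z (fun _ => P) P') {c : ℕ → ℝ}
    (hc : Tendsto c atTop (𝓝 0)) :
    TendstoInMeasure P (fun n ω => c n * X n ω) atTop 0 := by
  have hcm : TendstoInMeasure P (fun n (_ : Ω) => c n) atTop (fun _ => 0) :=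
    tendstoInMeasure_of_tendsto_ae (fun _ => aestronglyMeasurable_const) (ae_of_all _ fun _ => hc)
  have hd := hX.continuous_comp_prodMk_of_tendstoInMeasure_const
    (g := fun p : ℝ × ℝ => p.2 * p.1) (by fun_prop) hcm (fun _ => aemeasurable_const)
  rw [tendstoInMeasure_iff_norm]
  intro ε hε
  have hclosed : MeasurableSet {x : ℝ | ε ≤ |x|} :=
    measurableSet_le measurable_const measurable_abs
  have hnull : P'.map (fun ω => (0 : ℝ) * Z ω) (frontier {x : ℝ | ε ≤ |x|}) = 0 := by
    refine measure_mono_null (frontier_le_subset_eq continuous_const continuous_abs) ?_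
    simp [Measure.map_const, hε.ne']
  have hlim := ProbabilityMeasure.tendsto_measure_of_null_frontier_of_tendsto' hd.tendsto hnull
  have hzero : P'.map (fun ω => (0 : ℝ) * Z ω) {x : ℝ | ε ≤ |x|} = 0 := by
    simp [Measure.map_const, hε]
  simp only [ProbabilityMeasure.coe_mk, hzero] at hlim
  refine hlim.congr fun n => ?_
  rw [Measure.map_apply_of_aemeasurable (hd.forall_aemeasurable n) hclosed]
  simp

/-- Convergence of the expectations of all bounded continuous test functions is convergence in
distribution to the identity under the limit law. -/
theorem tendstoInDistribution_id_iff {Ω : Type*} [MeasurableSpace Ω] {P : Measure Ω}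
    [IsProbabilityMeasure P] {J : Measure ℝ} [IsProbabilityMeasure J] {X : ℕ → Ω → ℝ}
    (hX : ∀ n, Measurable (X n)) :
    TendstoInDistribution X atTop id (fun _ => P) J ↔
      ∀ f : BoundedContinuousFunction ℝ ℝ,
        Tendsto (fun n => ∫ ω, f (X n ω) ∂P) atTop (𝓝 (∫ x, f x ∂J)) := by
  have hint : ∀ (f : BoundedContinuousFunction ℝ ℝ) n,
      ∫ x, f x ∂P.map (X n) = ∫ ω, f (X n ω) ∂P := fun f n =>
    integral_map (hX n).aemeasurable f.continuous.aestronglyMeasurable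
  constructor
  · intro h f
    simpa [hint] using ProbabilityMeasure.tendsto_iff_forall_integral_tendsto.1 h.tendsto f
  · intro h
    refine ⟨fun n => (hX n).aemeasurable, aemeasurable_id,
      ProbabilityMeasure.tendsto_iff_forall_integral_tendsto.2 fun f => ?_⟩
    simpa [hint] using h f

/-- if `n^{-γ} L(n)|T_n − μ|` converges in distribution to `J` (with `γ < 0`
and `L` slowly varying, `L(k) > 0` for `k ≥ 1`), and `k_n → ∞` with `k_n/n → 0`, then
`k_n^{-γ} L(k_n)(T_n − μ) → 0` in probability, and consequently
`k_n^{-γ} L(k_n)|T_{k_n} − T_n|` converges in distribution to `J`. -/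
theorem shifted_scaling_weak_convergence
    {Ω : Type*} [MeasurableSpace Ω] (P : Measure Ω) [IsProbabilityMeasure P]
    (T : ℕ → Ω → ℝ) (hTmeas : ∀ k, Measurable (T k))
    (μ γ : ℝ) (hγ : γ < 0)
    (L : ℝ → ℝ)
    (hLmeas : Measurable L) (hLpos : ∀ᶠ x in atTop, 0 < L x)
    (hLslow : ∀ t : ℝ, 0 < t →
      Tendsto (fun x => L (t * x) / L x) atTop (nhds 1))
    (hLposk : ∀ k : ℕ, 1 ≤ k → 0 < L k)
    (J : Measure ℝ) [IsProbabilityMeasure J]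
    (hdist : ∀ f : BoundedContinuousFunction ℝ ℝ,
      Tendsto (fun n : ℕ => ∫ ω, f ((n : ℝ) ^ (-γ) * L n * |T n ω - μ|) ∂P)
        atTop (nhds (∫ x, f x ∂J)))
    (k : ℕ → ℕ) (hk1 : ∀ n, 1 ≤ k n)
    (hktop : Tendsto k atTop atTop)
    (hkn : Tendsto (fun n : ℕ => (k n : ℝ) / n) atTop (nhds 0)) :
    (∀ ε : ℝ, 0 < ε →
      Tendsto (fun n : ℕ =>
          P {ω | ε < |((k n : ℝ)) ^ (-γ) * L (k n) * (T n ω - μ)|}) atTop (nhds 0)) ∧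
    (∀ f : BoundedContinuousFunction ℝ ℝ,
      Tendsto (fun n : ℕ =>
          ∫ ω, f (((k n : ℝ)) ^ (-γ) * L (k n) * |T (k n) ω - T n ω|) ∂P)
        atTop (nhds (∫ x, f x ∂J))) := by
  set a : ℕ → ℝ := fun n => (n : ℝ) ^ (-γ) * L n
  have ha_pos : ∀ n, 1 ≤ n → 0 < a n := fun n hn =>
    mul_pos (Real.rpow_pos_of_pos (by exact_mod_cast hn) _) (hLposk n hn)
  have hratio : Tendsto (fun n => a (k n) / a n) atTop (𝓝 0) :=
    tendsto_rpow_mul_slowlyVarying_div hLmeas hLpos hLslow (neg_pos.2 hγ) hktop hkn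
  have hXmeas : ∀ n, Measurable fun ω => a n * |T n ω - μ| := fun n =>
    (((hTmeas n).sub_const μ).abs).const_mul _
  have hX : TendstoInDistribution (fun n ω => a n * |T n ω - μ|) atTop id (fun _ => P) J :=
    (tendstoInDistribution_id_iff hXmeas).2 hdist
  have hprob := tendstoInMeasure_iff_norm.1 (hX.const_mul_tendstoInMeasure_zero hratio)
  have hnorm : ∀ n, 1 ≤ n → ∀ ω,
      ‖a (k n) / a n * (a n * |T n ω - μ|) - (0 : Ω → ℝ) ω‖ = |a (k n) * (T n ω - μ)| := by
    intro n hn ω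
    rw [← mul_assoc, div_mul_cancel₀ _ (ha_pos n hn).ne']
    simp [abs_mul]
  constructor
  · intro ε hε
    refine tendsto_of_tendsto_of_tendsto_of_le_of_le' tendsto_const_nhds (hprob ε hε)
      (.of_forall fun _ => zero_le) ?_
    filter_upwards [eventually_ge_atTop 1] with n hn
    refine measure_mono fun ω hω => ?_
    rw [Set.mem_ofPred_eq, hnorm n hn]
    exact le_of_lt hω
  · have hYmeas : ∀ n, Measurable fun ω => a (k n) * |T (k n) ω - T n ω| := fun n =>
      (((hTmeas _).sub (hTmeas n)).abs).const_mul _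
    have hXk : TendstoInDistribution (fun n ω => a (k n) * |T (k n) ω - μ|) atTop id
        (fun _ => P) J :=
      (tendstoInDistribution_id_iff fun n => hXmeas (k n)).2 fun f => (hdist f).comp hktop
    refine (tendstoInDistribution_id_iff hYmeas).1
      (tendstoInDistribution_of_tendstoInMeasure_sub _ _ hXk ?_ fun n => (hYmeas n).aemeasurable)
    rw [tendstoInMeasure_iff_norm]
    intro ε hε
    refine tendsto_of_tendsto_of_tendsto_of_le_of_le' tendsto_const_nhds (hprob ε hε)
      (.of_forall fun _ => zero_le) ?_
    filter_upwards [eventually_ge_atTop 1] with n hn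
    refine measure_mono fun ω hω => ?_
    rw [Set.mem_ofPred_eq, hnorm n hn]
    refine le_trans (Set.mem_ofPred_eq ▸ hω) ?_
    have htri := abs_abs_sub_abs_le_abs_sub (T (k n) ω - T n ω) (T (k n) ω - μ)
    rw [sub_sub_sub_cancel_left, abs_sub_comm μ] at htri
    simp only [Pi.sub_apply, Pi.zero_apply, sub_zero, Real.norm_eq_abs, ← mul_sub, abs_mul]
    gcongr
end
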